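/- Fix n, k ∈ ℕ and η ∈ [0,1). For all ε, δ ∈ (0,1), the randomized query complexity of the class J_{n,k,η} of bounded (k,η)-juntas satisfies Q_r(J_{n,k,η}, 2η + ε, δ) ≤ (2^{k+5}/ε) · log( (2/δ) · Σ_{r=0}^{k} C(n,r) ). -/

import Mathlib

/-!
The learner estimates every Fourier–Walsh coefficient `f̂(S)`, `|S| ≤ k`, by its empirical mean
`α_S`, picks a set `σ` of at most `k` coordinates maximising `Σ_{S ⊆ σ} α_S²`, and outputs
`Σ_{S ⊆ σ} α_S w_S`.

By Hoeffding's inequality (`card_deviation_le`) and a union bound over the `Σ_{r ≤ k} C(n,r)` sets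
`S` (`le_card_good`), all estimates are within `b` of the truth with probability at least `1 - δ`
once `Q b² / 2 ≥ log((2/δ) Σ_{r ≤ k} C(n,r))`.

On that event, suppose `f` is `η`-close to a junta on `τ`. By Parseval (`dist2_eq_sum`) the squared
error of the hypothesis is the estimation error on the subsets of `σ`, at most `2^k b²`, plus the
mass of `f̂` off the subsets of `σ`. The mass off the subsets of both `σ` and `τ`, together with the
mass on the subsets of `σ` but not of `τ`, is at most `η`. By maximality of `σ`, the mass on the
subsets of `τ` but not of `σ` is, up to a multiple of `2^k b²`, at most twice the mass on the
subsets of `σ` but not of `τ`. The total is at most `2η + 10 · 2^k b²`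
(`sum_truncation_sub_sq_le`), and `b² = ε / (10 · 2^k)` gives the theorem.
-/

open Finset

namespace EIS

/-- Walsh function `w_S(x) = ∏_{i ∈ S} x_i`, with points of the hypercube encoded by
`Fin n → Bool` (`true ↦ 1`, `false ↦ -1`). -/
noncomputable def walsh {n : ℕ} (S : Finset (Fin n)) (x : Fin n → Bool) : ℝ :=
  ∏ i ∈ S, (if x i then (1 : ℝ) else -1)

/-- Fourier–Walsh coefficient `f̂(S) = E_x f(x) w_S(x)`. -/
noncomputable def fourierCoeff {n : ℕ} (f : (Fin n → Bool) → ℝ) (S : Finset (Fin n)) : ℝ :=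
  (∑ x : Fin n → Bool, f x * walsh S x) / 2 ^ n

/-- `f` has degree at most `d`: all Fourier coefficients above level `d` vanish. -/
def DegLE (n d : ℕ) (f : (Fin n → Bool) → ℝ) : Prop :=
  ∀ S : Finset (Fin n), d < S.card → fourierCoeff f S = 0

/-- Squared L₂ distance `‖f - g‖²_{L₂} = E_x (f(x) - g(x))²` w.r.t. the uniform measure. -/
noncomputable def dist2 {n : ℕ} (f g : (Fin n → Bool) → ℝ) : ℝ :=
  (∑ x : Fin n → Bool, (f x - g x) ^ 2) / 2 ^ n

/-- `f` takes values in `[-1, 1]`. -/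
def Bounded1 {n : ℕ} (f : (Fin n → Bool) → ℝ) : Prop := ∀ x, |f x| ≤ 1

/-- `f` is Boolean, i.e. takes values in `{-1, 1}`. -/
def BoolValued {n : ℕ} (f : (Fin n → Bool) → ℝ) : Prop := ∀ x, f x = 1 ∨ f x = -1

/-- The class `F_{n,d}` of `[-1,1]`-valued functions of degree at most `d`. -/
def Fclass (n d : ℕ) : Set ((Fin n → Bool) → ℝ) := {f | Bounded1 f ∧ DegLE n d f}

/-- The class `B_{n,d}` of Boolean functions of degree at most `d`. -/
def Bclass (n d : ℕ) : Set ((Fin n → Bool) → ℝ) := {f | BoolValued f ∧ DegLE n d f}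

/-- The Fourier tail `Σ_{|S| > d} f̂(S)²`. -/
noncomputable def fourierTail (n d : ℕ) (f : (Fin n → Bool) → ℝ) : ℝ :=
  ∑ S ∈ Finset.univ.filter (fun S : Finset (Fin n) => d < S.card), fourierCoeff f S ^ 2

/-- A deterministic adaptive learning algorithm: `query` maps the history of
(queried point, observed value) pairs to the next query point (in particular `query []` is the
fixed first query point), and `output` maps the final history to the hypothesis function. -/
structure DetAlgo (n : ℕ) where
  query : List ((Fin n → Bool) × ℝ) → (Fin n → Bool)
  output : List ((Fin n → Bool) × ℝ) → ((Fin n → Bool) → ℝ)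

/-- The history of the run of a deterministic adaptive algorithm `A` on the unknown function `f`
after `q` queries. -/
def runHist {n : ℕ} (A : DetAlgo n) (f : (Fin n → Bool) → ℝ) : ℕ → List ((Fin n → Bool) × ℝ)
  | 0 => []
  | q + 1 =>
      let h := runHist A f q
      h ++ [(A.query h, f (A.query h))]

/-- `A` learns the class `F` with `Q` queries and L₂-error `ε`:
for every `f ∈ F` the produced hypothesis `h` satisfies `‖h - f‖²_{L₂} ≤ ε`. -/
def DetLearns {n : ℕ} (A : DetAlgo n) (Q : ℕ) (F : Set ((Fin n → Bool) → ℝ)) (ε : ℝ) : Prop :=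
  ∀ f ∈ F, dist2 (A.output (runHist A f Q)) f ≤ ε

/-- The random-example algorithm `H` (a map from `Q` labeled examples to a hypothesis) learns the
class `F` with L₂-error `ε` and confidence `1 - δ`: for every `f ∈ F`, the fraction of
tuples `(X₁, …, X_Q)` of sample points (equivalently, the probability with respect to i.i.d.
uniform samples) for which `‖H((X₁, f(X₁)), …, (X_Q, f(X_Q))) - f‖²_{L₂} ≤ ε` is at
least `1 - δ`. -/
def RandLearns {n : ℕ} (Q : ℕ)
    (H : (Fin Q → (Fin n → Bool) × ℝ) → ((Fin n → Bool) → ℝ))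
    (F : Set ((Fin n → Bool) → ℝ)) (ε δ : ℝ) : Prop :=
  ∀ f ∈ F,
    (1 - δ) * ((2 : ℝ) ^ n) ^ Q ≤
      (Nat.card {X : Fin Q → Fin n → Bool //
        dist2 (H fun j => (X j, f (X j))) f ≤ ε} : ℝ)

/-- `g` depends only on the coordinates in `σ`. -/
def DependsOn {n : ℕ} (σ : Finset (Fin n)) (g : (Fin n → Bool) → ℝ) : Prop :=
  ∀ x y : Fin n → Bool, (∀ i ∈ σ, x i = y i) → g x = g y

/-- `f` is a `(k, η)`-junta. -/
def Junta (n k : ℕ) (η : ℝ) (f : (Fin n → Bool) → ℝ) : Prop :=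
  ∃ σ : Finset (Fin n), σ.card ≤ k ∧
    ∃ g : (Fin n → Bool) → ℝ, DependsOn σ g ∧ dist2 f g ≤ η

/-- The class `J_{n,k,η}` of `[-1,1]`-valued `(k, η)`-juntas. -/
def Jclass (n k : ℕ) (η : ℝ) : Set ((Fin n → Bool) → ℝ) := {f | Bounded1 f ∧ Junta n k η f}

end EIS

open EIS

/-! ### Fourier–Walsh analysis -/

/-- The Walsh functions separate points: `Σ_S w_S(x) w_S(y)` is `2^n` on the diagonal and `0` off
it, since it factors as `∏ᵢ (1 + xᵢ yᵢ)`. -/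
lemma sum_walsh_mul_walsh_index {n : ℕ} (x y : Fin n → Bool) :
    ∑ S : Finset (Fin n), walsh S x * walsh S y = if x = y then (2 : ℝ) ^ n else 0 := by
  have h1 : ∑ S : Finset (Fin n), walsh S x * walsh S y
      = ∏ i : Fin n, (1 + (if x i then (1 : ℝ) else -1) * (if y i then (1 : ℝ) else -1)) := by
    rw [Finset.prod_one_add, Finset.powerset_univ]
    exact Finset.sum_congr rfl fun S _ => (Finset.prod_mul_distrib).symm
  rw [h1]
  split_ifs with h
  · subst h
    rw [Finset.prod_congr rfl (g := fun _ => (2 : ℝ))]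
    · simp
    · intro i _
      cases x i <;> norm_num
  · obtain ⟨i, hi⟩ := Function.ne_iff.mp h
    apply Finset.prod_eq_zero (Finset.mem_univ i)
    revert hi
    cases x i <;> cases y i <;> norm_num

/-- Orthogonality of the Walsh functions. -/
lemma sum_walsh_mul_walsh_point {n : ℕ} (S T : Finset (Fin n)) :
    ∑ x : Fin n → Bool, walsh S x * walsh T x = if S = T then (2 : ℝ) ^ n else 0 := by
  have h1 : ∀ x : Fin n → Bool, walsh S x * walsh T x
      = ∏ i : Fin n, ((if i ∈ S then (if x i then (1 : ℝ) else -1) else 1) *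
          (if i ∈ T then (if x i then (1 : ℝ) else -1) else 1)) := by
    intro x
    rw [Finset.prod_mul_distrib, Finset.prod_ite_mem, Finset.prod_ite_mem, Finset.univ_inter,
      Finset.univ_inter, walsh, walsh]
  have h2 := Finset.prod_univ_sum (fun _ : Fin n => (Finset.univ : Finset Bool))
    (fun i b => ((if i ∈ S then (if b then (1 : ℝ) else -1) else 1) *
          (if i ∈ T then (if b then (1 : ℝ) else -1) else 1)))
  rw [Fintype.piFinset_univ] at h2
  rw [Finset.sum_congr rfl (fun x _ => h1 x), ← h2]
  split_ifs with h
  · subst h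
    rw [Finset.prod_congr rfl (g := fun _ => (2 : ℝ))]
    · simp
    · intro i _
      by_cases hi : i ∈ S <;> simp [hi] <;> norm_num
  · obtain ⟨i, hi⟩ : ∃ i, ¬ (i ∈ S ↔ i ∈ T) := by
      by_contra! hc
      exact h (Finset.ext hc)
    apply Finset.prod_eq_zero (Finset.mem_univ i)
    by_cases hS : i ∈ S <;> by_cases hT : i ∈ T <;> simp_all

lemma fourierCoeff_sum {n : ℕ} (c : Finset (Fin n) → ℝ) (T : Finset (Fin n)) :
    fourierCoeff (fun x => ∑ S, c S * walsh S x) T = c T := by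
  unfold EIS.fourierCoeff
  have h : ∑ x : Fin n → Bool, (∑ S, c S * walsh S x) * walsh T x = c T * 2 ^ n := by
    simp_rw [Finset.sum_mul, mul_assoc]
    rw [Finset.sum_comm]
    simp_rw [← Finset.mul_sum, sum_walsh_mul_walsh_point]
    simp
  rw [h]
  field_simp

lemma fourierCoeff_sub {n : ℕ} (f g : (Fin n → Bool) → ℝ) (S : Finset (Fin n)) :
    fourierCoeff (fun x => f x - g x) S = fourierCoeff f S - fourierCoeff g S := by
  simp [EIS.fourierCoeff, sub_mul, Finset.sum_sub_distrib, sub_div]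

/-- Parseval's identity. -/
lemma sum_fourierCoeff_sq {n : ℕ} (f : (Fin n → Bool) → ℝ) :
    ∑ S, fourierCoeff f S ^ 2 = (∑ x, f x ^ 2) / 2 ^ n := by
  have h : ∑ S : Finset (Fin n), (∑ x : Fin n → Bool, f x * walsh S x) ^ 2
      = (∑ x, f x ^ 2) * 2 ^ n := by
    calc ∑ S : Finset (Fin n), (∑ x : Fin n → Bool, f x * walsh S x) ^ 2
        = ∑ S : Finset (Fin n), ∑ x : Fin n → Bool, ∑ y : Fin n → Bool,
            (f x * f y) * (walsh S x * walsh S y) := by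
          refine Finset.sum_congr rfl fun S _ => ?_
          rw [sq, Finset.sum_mul_sum]
          refine Finset.sum_congr rfl fun x _ => Finset.sum_congr rfl fun y _ => by ring
      _ = ∑ x : Fin n → Bool, ∑ y : Fin n → Bool,
            (f x * f y) * ∑ S : Finset (Fin n), walsh S x * walsh S y := by
          rw [Finset.sum_comm]
          refine Finset.sum_congr rfl fun x _ => ?_
          rw [Finset.sum_comm]
          simp_rw [Finset.mul_sum]
      _ = (∑ x, f x ^ 2) * 2 ^ n := by
          simp_rw [sum_walsh_mul_walsh_index, Finset.sum_mul]
          refine Finset.sum_congr rfl fun x _ => ?_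
          simp [sq]
  simp_rw [EIS.fourierCoeff, div_pow]
  rw [← Finset.sum_div, h]
  field_simp

lemma dist2_eq_sum {n : ℕ} (f g : (Fin n → Bool) → ℝ) :
    dist2 f g = ∑ S, (fourierCoeff f S - fourierCoeff g S) ^ 2 := by
  simp_rw [← fourierCoeff_sub]
  rw [sum_fourierCoeff_sq, dist2]

/-- A function of the coordinates in `σ` has no Fourier mass outside the subsets of `σ`: flipping a
coordinate `i ∈ S \ σ` changes the sign of `g w_S`. -/
lemma fourierCoeff_eq_zero_of_dependsOn {n : ℕ} {σ : Finset (Fin n)} {g : (Fin n → Bool) → ℝ}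
    (hg : EIS.DependsOn σ g) {S : Finset (Fin n)} (hS : ¬ S ⊆ σ) : fourierCoeff g S = 0 := by
  obtain ⟨i, hiS, hiσ⟩ := Finset.not_subset.mp hS
  have hflip : ∀ x : Fin n → Bool, walsh S (Function.update x i (!x i)) = - walsh S x := by
    intro x
    unfold walsh
    rw [← Finset.mul_prod_erase S _ hiS, ← Finset.mul_prod_erase S _ hiS, ← neg_mul]
    congr 1
    · cases h : x i <;> simp
    · refine Finset.prod_congr rfl fun j hj => ?_
      rw [Function.update_of_ne (Finset.ne_of_mem_erase hj)]
  have hgflip : ∀ x : Fin n → Bool, g (Function.update x i (!x i)) = g x := by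
    intro x
    apply hg
    intro j hj
    rw [Function.update_of_ne]
    rintro rfl
    exact hiσ hj
  have h0 : ∑ x : Fin n → Bool, g x * walsh S x = 0 := by
    refine Finset.sum_involution (fun x _ => Function.update x i (!x i)) ?_ ?_ ?_ ?_
    · intro x _
      rw [hflip, hgflip]
      ring
    · intro x _ _ h
      have := congrFun h i
      simp at this
    · intro x _
      exact Finset.mem_univ _
    · intro x _
      simp
  rw [EIS.fourierCoeff, h0, zero_div]

/-- A function at squared distance at most `η` from a junta on `σ` has Fourier mass at most `η`
outside the subsets of `σ`. -/
lemma sum_fourierCoeff_sq_compl_le {n : ℕ} {σ : Finset (Fin n)} {f g : (Fin n → Bool) → ℝ} {η : ℝ}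
    (hg : EIS.DependsOn σ g) (h : dist2 f g ≤ η) :
    ∑ S ∈ (σ.powerset)ᶜ, fourierCoeff f S ^ 2 ≤ η := by
  refine le_trans ?_ h
  rw [dist2_eq_sum]
  calc ∑ S ∈ (σ.powerset)ᶜ, fourierCoeff f S ^ 2
      = ∑ S ∈ (σ.powerset)ᶜ, (fourierCoeff f S - fourierCoeff g S) ^ 2 := by
        refine Finset.sum_congr rfl fun S hS => ?_
        rw [fourierCoeff_eq_zero_of_dependsOn hg (S := S) (by simpa using hS), sub_zero]
    _ ≤ _ := Finset.sum_le_sum_of_subset_of_nonneg (Finset.subset_univ _)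
        fun _ _ _ => sq_nonneg _

/-! ### Stability of the greedy choice -/

/-- Let `α` approximate `F` up to `b` on `A ∪ B`, let `F` have mass at most `η` outside `B`, and
let `A` carry at least as much empirical mass as `B`. Then the truncation of `α` to `A` is close to
`F`. The mass of `F` on `B \ A`, which the truncation misses, is traded for the mass of `F` on
`A \ B`, itself part of the tail outside `B`; this is what costs the factor `2`. -/
lemma sum_truncation_sub_sq_le {ι : Type*} [Fintype ι] [DecidableEq ι] (A B : Finset ι)
    (α F : ι → ℝ) (K b η : ℝ) (hA : (A.card : ℝ) ≤ K) (hB : (B.card : ℝ) ≤ K)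
    (hαA : ∀ i ∈ A, |α i - F i| ≤ b) (hαB : ∀ i ∈ B, |α i - F i| ≤ b)
    (hmax : ∑ i ∈ B, α i ^ 2 ≤ ∑ i ∈ A, α i ^ 2) (hη : ∑ i ∈ Bᶜ, F i ^ 2 ≤ η) :
    ∑ i, ((if i ∈ A then α i else 0) - F i) ^ 2 ≤ 2 * η + 10 * (K * b ^ 2) := by
  have hsplit : ∑ i, ((if i ∈ A then α i else 0) - F i) ^ 2
      = ∑ i ∈ A, (α i - F i) ^ 2 + ∑ i ∈ Aᶜ, F i ^ 2 := by
    rw [← Finset.sum_add_sum_compl A]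
    congr 1
    · refine Finset.sum_congr rfl fun i hi => by simp [hi]
    · refine Finset.sum_congr rfl fun i hi => ?_
      rw [if_neg (Finset.mem_compl.mp hi)]
      ring
  have hc : ∀ U V : Finset ι, ∑ i ∈ Uᶜ, F i ^ 2
      = ∑ i ∈ V \ U, F i ^ 2 + ∑ i ∈ (U ∪ V)ᶜ, F i ^ 2 := by
    intro U V
    rw [← Finset.sum_union]
    · refine Finset.sum_congr ?_ fun _ _ => rfl
      ext i
      simp
      tauto
    · rw [Finset.disjoint_left]
      intro i hi
      simp at hi ⊢
      tauto
  have hAc := hc A B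
  have hBc := hc B A
  rw [Finset.union_comm] at hBc
  have hsq : ∀ i, |α i - F i| ≤ b → (α i - F i) ^ 2 ≤ b ^ 2 := fun i h =>
    sq_le_sq' (by linarith [(abs_le.mp h).1]) (abs_le.mp h).2
  have hbound : ∀ (C U : Finset ι) (u : ι → ℝ), C ⊆ U → (U.card : ℝ) ≤ K →
      (∀ i ∈ C, u i ≤ b ^ 2) → ∑ i ∈ C, u i ≤ K * b ^ 2 := by
    intro C U u hCU hU hu
    calc ∑ i ∈ C, u i ≤ C.card • b ^ 2 := Finset.sum_le_card_nsmul _ _ _ hu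
      _ ≤ K * b ^ 2 := by
        rw [nsmul_eq_mul]
        have : (C.card : ℝ) ≤ U.card := by exact_mod_cast Finset.card_le_card hCU
        gcongr
        linarith
  have hA1 := hbound A A _ subset_rfl hA fun i hi => hsq i (hαA i hi)
  have hA2 := hbound (A \ B) A _ Finset.sdiff_subset hA
    fun i hi => hsq i (hαA i (Finset.sdiff_subset hi))
  have hB2 := hbound (B \ A) B _ Finset.sdiff_subset hB
    fun i hi => hsq i (hαB i (Finset.sdiff_subset hi))
  have hmax' : ∑ i ∈ B \ A, α i ^ 2 ≤ ∑ i ∈ A \ B, α i ^ 2 := by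
    have e1 := Finset.sum_inter_add_sum_sdiff A B (fun i => α i ^ 2)
    have e2 := Finset.sum_inter_add_sum_sdiff B A (fun i => α i ^ 2)
    rw [Finset.inter_comm] at e2
    linarith
  -- `(u + v)² ≤ (1 + θ) u² + (1 + 1/θ) v²` with `θ = 2/5`, for which `(1 + θ)² ≤ 2`.
  have hF : ∀ C : Finset ι, ∑ i ∈ C, F i ^ 2
      ≤ 7 / 5 * ∑ i ∈ C, α i ^ 2 + 7 / 2 * ∑ i ∈ C, (α i - F i) ^ 2 := by
    intro C
    rw [Finset.mul_sum, Finset.mul_sum, ← Finset.sum_add_distrib]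
    refine Finset.sum_le_sum fun i _ => ?_
    nlinarith [sq_nonneg (2 * α i + 5 * (α i - F i))]
  have hα : ∀ C : Finset ι, ∑ i ∈ C, α i ^ 2
      ≤ 7 / 5 * ∑ i ∈ C, F i ^ 2 + 7 / 2 * ∑ i ∈ C, (α i - F i) ^ 2 := by
    intro C
    rw [Finset.mul_sum, Finset.mul_sum, ← Finset.sum_add_distrib]
    refine Finset.sum_le_sum fun i _ => ?_
    nlinarith [sq_nonneg (2 * F i - 5 * (α i - F i))]
  have p1 := hF (B \ A)
  have p2 := hα (A \ B)
  have n1 : 0 ≤ ∑ i ∈ A \ B, F i ^ 2 := Finset.sum_nonneg fun _ _ => sq_nonneg _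
  have n2 : 0 ≤ ∑ i ∈ (A ∪ B)ᶜ, F i ^ 2 := Finset.sum_nonneg fun _ _ => sq_nonneg _
  have n3 : 0 ≤ ∑ i ∈ A, (α i - F i) ^ 2 := Finset.sum_nonneg fun _ _ => sq_nonneg _
  linarith

/-! ### Concentration of empirical means -/

open MeasureTheory ProbabilityTheory in
/-- Hoeffding's lemma for the uniform measure on a finite set. -/
lemma sum_exp_le {Ω : Type*} [Fintype Ω] [Nonempty Ω] (φ : Ω → ℝ) (hφ : ∀ x, |φ x| ≤ 1) (t : ℝ) :
    ∑ x, Real.exp (t * (φ x - (∑ y, φ y) / Fintype.card Ω))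
      ≤ Fintype.card Ω * Real.exp (t ^ 2 / 2) := by
  let _ : MeasurableSpace Ω := ⊤
  set p := PMF.uniformOfFintype Ω
  have hint : ∀ u : Ω → ℝ, ∫ x, u x ∂p.toMeasure = (∑ x, u x) / Fintype.card Ω := by
    intro u
    rw [PMF.integral_eq_sum]
    simp [p, ← Finset.mul_sum, div_eq_inv_mul]
  have h := (hasSubgaussianMGF_of_mem_Icc (μ := p.toMeasure) (X := φ) (a := -1) (b := 1)
    (measurable_from_top.aemeasurable)
    (Filter.Eventually.of_forall fun x => abs_le.mp (hφ x))).mgf_le t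
  have hc : (((‖(1 : ℝ) - -1‖₊ / 2) ^ 2 : NNReal) : ℝ) = 1 := by
    simp
    norm_num
  rw [mgf, hint, hint, hc, one_mul, div_le_iff₀ (by positivity)] at h
  linarith

/-- Hoeffding's inequality for `Q` independent uniform samples, in counting form. -/
lemma card_deviation_le {Ω : Type*} [Fintype Ω] [Nonempty Ω] (φ : Ω → ℝ)
    (hφ : ∀ x, |φ x| ≤ 1) (Q : ℕ) (b : ℝ) (hb : 0 ≤ b) :
    ((Finset.univ.filter fun X : Fin Q → Ω =>
        Q * b < ∑ j, (φ (X j) - (∑ y, φ y) / Fintype.card Ω)).card : ℝ)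
      ≤ (Fintype.card Ω : ℝ) ^ Q * Real.exp (-(Q * b ^ 2 / 2)) := by
  set m := (∑ y, φ y) / Fintype.card Ω
  have hmarkov : ((Finset.univ.filter fun X : Fin Q → Ω =>
        Q * b < ∑ j, (φ (X j) - m)).card : ℝ)
      ≤ ∑ X : Fin Q → Ω, Real.exp (b * (∑ j, (φ (X j) - m)) - Q * b ^ 2) := by
    rw [← nsmul_one, nsmul_eq_mul, ← nsmul_eq_mul]
    refine (Finset.card_nsmul_le_sum _
      (fun X : Fin Q → Ω => Real.exp (b * (∑ j, (φ (X j) - m)) - Q * b ^ 2)) 1 ?_).trans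
      (Finset.sum_le_sum_of_subset_of_nonneg (Finset.subset_univ _)
        fun _ _ _ => (Real.exp_pos _).le)
    intro X hX
    have hX' := (Finset.mem_filter.mp hX).2
    rw [Real.one_le_exp_iff]
    nlinarith
  refine hmarkov.trans ?_
  have hfac : ∑ X : Fin Q → Ω, Real.exp (b * (∑ j, (φ (X j) - m)) - Q * b ^ 2)
      = (∑ x, Real.exp (b * (φ x - m))) ^ Q * Real.exp (-(Q * b ^ 2)) := by
    rw [Fintype.sum_pow, Finset.sum_mul]
    refine Finset.sum_congr rfl fun X _ => ?_
    rw [← Real.exp_sum, ← Real.exp_add, Finset.mul_sum, sub_eq_add_neg]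
  rw [hfac]
  calc (∑ x, Real.exp (b * (φ x - m))) ^ Q * Real.exp (-(Q * b ^ 2))
      ≤ (Fintype.card Ω * Real.exp (b ^ 2 / 2)) ^ Q * Real.exp (-(Q * b ^ 2)) := by
        gcongr
        exact sum_exp_le φ hφ b
    _ = (Fintype.card Ω : ℝ) ^ Q * Real.exp (-(Q * b ^ 2 / 2)) := by
        rw [mul_pow, ← Real.exp_nat_mul, mul_assoc, ← Real.exp_add]
        congr 2
        ring

/-! ### The learning algorithm -/

/-- The empirical Fourier coefficient `(1/Q) Σ_j y_j w_S(x_j)` of the labelled examples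
`(x_j, y_j)`. -/
noncomputable def empCoeff {n Q : ℕ} (D : Fin Q → (Fin n → Bool) × ℝ) (S : Finset (Fin n)) : ℝ :=
  (∑ j, (D j).2 * walsh S (D j).1) / Q

lemma exists_max_mass (n k : ℕ) (a : Finset (Fin n) → ℝ) :
    ∃ σ : Finset (Fin n), σ.card ≤ k ∧ ∀ τ : Finset (Fin n), τ.card ≤ k →
      ∑ S ∈ τ.powerset, a S ^ 2 ≤ ∑ S ∈ σ.powerset, a S ^ 2 := by
  obtain ⟨σ, hσ, h⟩ := Finset.exists_max_image
    (Finset.univ.filter fun σ : Finset (Fin n) => σ.card ≤ k)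
    (fun σ => ∑ S ∈ σ.powerset, a S ^ 2) ⟨∅, by simp⟩
  exact ⟨σ, (Finset.mem_filter.mp hσ).2, fun τ hτ => h τ (by simp [hτ])⟩

/-- The hypothesis of the learner: among all `σ` with `|σ| ≤ k`, pick one with the largest
empirical Fourier mass `Σ_{S ⊆ σ} α_S²`, and output `Σ_{S ⊆ σ} α_S w_S`. -/
noncomputable def learner (n k Q : ℕ) (D : Fin Q → (Fin n → Bool) × ℝ) : (Fin n → Bool) → ℝ :=
  fun x => ∑ S, (if S ∈ (exists_max_mass n k (empCoeff D)).choose.powerset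
    then empCoeff D S else 0) * walsh S x

lemma card_powerset_le {n k : ℕ} {σ : Finset (Fin n)} (h : σ.card ≤ k) :
    ((σ.powerset).card : ℝ) ≤ 2 ^ k := by
  rw [Finset.card_powerset]
  push_cast
  exact pow_le_pow_right₀ (by norm_num) h

/-- If every empirical coefficient of level at most `k` is accurate up to `b`, the learner
succeeds. -/
lemma dist2_learner_le {n k Q : ℕ} {f : (Fin n → Bool) → ℝ} {η b : ℝ} (hf : Junta n k η f)
    (D : Fin Q → (Fin n → Bool) × ℝ)
    (hD : ∀ S : Finset (Fin n), S.card ≤ k → |empCoeff D S - fourierCoeff f S| ≤ b) :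
    dist2 (learner n k Q D) f ≤ 2 * η + 10 * (2 ^ k * b ^ 2) := by
  obtain ⟨τ, hτ, g, hg, hfg⟩ := hf
  obtain ⟨hσ, hmax⟩ := (exists_max_mass n k (empCoeff D)).choose_spec
  rw [dist2_eq_sum]
  unfold learner
  simp_rw [fourierCoeff_sum]
  refine sum_truncation_sub_sq_le _ τ.powerset _ _ _ b η (card_powerset_le hσ)
    (card_powerset_le hτ) ?_ ?_ (hmax τ hτ) (sum_fourierCoeff_sq_compl_le hg hfg)
  · exact fun S hS => hD S ((Finset.card_le_card (Finset.mem_powerset.mp hS)).trans hσ)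
  · exact fun S hS => hD S ((Finset.card_le_card (Finset.mem_powerset.mp hS)).trans hτ)

lemma card_filter_card_le (n k : ℕ) :
    (Finset.univ.filter fun S : Finset (Fin n) => S.card ≤ k).card
      = ∑ r ∈ Finset.range (k + 1), n.choose r := by
  rw [Finset.card_eq_sum_card_fiberwise (f := Finset.card) (t := Finset.range (k + 1))]
  · refine Finset.sum_congr rfl fun r hr => ?_
    have : (Finset.univ.filter fun S : Finset (Fin n) => S.card ≤ k).filter (fun S => S.card = r)
        = Finset.powersetCard r Finset.univ := by
      ext S
      have := Finset.mem_range.mp hr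
      simp [Finset.mem_powersetCard]
      omega
    rw [this, Finset.card_powersetCard, Finset.card_univ, Fintype.card_fin]
  · intro S hS
    simpa [Nat.lt_succ_iff] using hS

lemma abs_walsh {n : ℕ} (S : Finset (Fin n)) (x : Fin n → Bool) : |walsh S x| = 1 := by
  rw [walsh, Finset.abs_prod]
  refine Finset.prod_eq_one fun i _ => ?_
  cases x i <;> simp

/-- Two-sided tail bound for a single empirical coefficient. -/
lemma card_empCoeff_bad_le {n Q : ℕ} (hQ : 0 < Q) {f : (Fin n → Bool) → ℝ} (hf : Bounded1 f)
    {b : ℝ} (hb : 0 ≤ b) (S : Finset (Fin n)) :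
    ((Finset.univ.filter fun X : Fin Q → Fin n → Bool =>
        b < |empCoeff (fun j => (X j, f (X j))) S - fourierCoeff f S|).card : ℝ)
      ≤ 2 * (((2 : ℝ) ^ n) ^ Q * Real.exp (-(Q * b ^ 2 / 2))) := by
  have hQ' : (0 : ℝ) < Q := by exact_mod_cast hQ
  have hcard : (Fintype.card (Fin n → Bool) : ℝ) = 2 ^ n := by simp
  have hφ : ∀ x, |f x * walsh S x| ≤ 1 := fun x => by
    rw [abs_mul, abs_walsh, mul_one]
    exact hf x
  have h1 := card_deviation_le (fun x => f x * walsh S x) hφ Q b hb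
  have h2 := card_deviation_le (fun x => -(f x * walsh S x))
    (fun x => by rw [abs_neg]; exact hφ x) Q b hb
  rw [hcard] at h1 h2
  have hsub : (Finset.univ.filter fun X : Fin Q → Fin n → Bool =>
        b < |empCoeff (fun j => (X j, f (X j))) S - fourierCoeff f S|) ⊆
      (Finset.univ.filter fun X : Fin Q → Fin n → Bool =>
        Q * b < ∑ j, (f (X j) * walsh S (X j) - (∑ y, f y * walsh S y) / 2 ^ n)) ∪
      (Finset.univ.filter fun X : Fin Q → Fin n → Bool =>
        Q * b < ∑ j, (-(f (X j) * walsh S (X j)) - (∑ y, -(f y * walsh S y)) / 2 ^ n)) := by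
    intro X hX
    have hX' := (Finset.mem_filter.mp hX).2
    have e1 : ∑ j, (f (X j) * walsh S (X j) - (∑ y, f y * walsh S y) / 2 ^ n)
        = Q * (empCoeff (fun j => (X j, f (X j))) S - fourierCoeff f S) := by
      rw [Finset.sum_sub_distrib, empCoeff, EIS.fourierCoeff, mul_sub, mul_div_cancel₀ _ hQ'.ne']
      simp
    have e2 : ∑ j, (-(f (X j) * walsh S (X j)) - (∑ y, -(f y * walsh S y)) / 2 ^ n)
        = Q * -(empCoeff (fun j => (X j, f (X j))) S - fourierCoeff f S) := by
      rw [mul_neg, ← e1, ← Finset.sum_neg_distrib]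
      refine Finset.sum_congr rfl fun j _ => ?_
      rw [Finset.sum_neg_distrib]
      ring
    simp only [Finset.mem_union, Finset.mem_filter, Finset.mem_univ, true_and]
    rw [e1, e2]
    rcases lt_abs.mp hX' with h | h
    · exact Or.inl (mul_lt_mul_of_pos_left h hQ')
    · exact Or.inr (mul_lt_mul_of_pos_left h hQ')
  have h3 := (Finset.card_le_card hsub).trans (Finset.card_union_le _ _)
  have h4 : ((Finset.univ.filter fun X : Fin Q → Fin n → Bool =>
        b < |empCoeff (fun j => (X j, f (X j))) S - fourierCoeff f S|).card : ℝ) ≤ _ :=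
    Nat.cast_le.mpr h3
  push_cast at h4
  linarith

/-- Union bound over the coefficients of level at most `k`. -/
lemma le_card_good {n k Q : ℕ} (hQ : 0 < Q) {f : (Fin n → Bool) → ℝ} (hf : Bounded1 f)
    {b δ : ℝ} (hb : 0 ≤ b)
    (hδ : 2 * (∑ r ∈ Finset.range (k + 1), (n.choose r : ℝ)) * Real.exp (-(Q * b ^ 2 / 2)) ≤ δ) :
    (1 - δ) * ((2 : ℝ) ^ n) ^ Q ≤
      ((Finset.univ.filter fun X : Fin Q → Fin n → Bool => ∀ S : Finset (Fin n), S.card ≤ k →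
        |empCoeff (fun j => (X j, f (X j))) S - fourierCoeff f S| ≤ b).card : ℝ) := by
  set P : (Fin Q → Fin n → Bool) → Prop := fun X => ∀ S : Finset (Fin n), S.card ≤ k →
        |empCoeff (fun j => (X j, f (X j))) S - fourierCoeff f S| ≤ b
  have htot : ((Finset.univ.filter P).card : ℝ) + ((Finset.univ.filter fun X => ¬ P X).card : ℝ)
      = ((2 : ℝ) ^ n) ^ Q := by
    have := Finset.card_filter_add_card_filter_not
      (s := (Finset.univ : Finset (Fin Q → Fin n → Bool))) P
    rw [← Nat.cast_add, this]
    simp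
  have hsub : (Finset.univ.filter fun X => ¬ P X) ⊆
      (Finset.univ.filter fun S : Finset (Fin n) => S.card ≤ k).biUnion fun S =>
        (Finset.univ.filter fun X : Fin Q → Fin n → Bool =>
          b < |empCoeff (fun j => (X j, f (X j))) S - fourierCoeff f S|) := by
    intro X hX
    have hX' := (Finset.mem_filter.mp hX).2
    simp only [P] at hX'
    push Not at hX'
    simpa using hX'
  have hbad : ((Finset.univ.filter fun X => ¬ P X).card : ℝ)
      ≤ (∑ r ∈ Finset.range (k + 1), (n.choose r : ℝ)) *
        (2 * (((2 : ℝ) ^ n) ^ Q * Real.exp (-(Q * b ^ 2 / 2)))) := by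
    have h1 := (Finset.card_le_card hsub).trans Finset.card_biUnion_le
    have h2 : ((Finset.univ.filter fun X => ¬ P X).card : ℝ) ≤ _ := Nat.cast_le.mpr h1
    refine h2.trans ?_
    push_cast
    refine (Finset.sum_le_card_nsmul _ _ _ fun S _ => card_empCoeff_bad_le hQ hf hb S).trans ?_
    rw [card_filter_card_le, nsmul_eq_mul]
    push_cast
    exact le_rfl
  have hpos : (0 : ℝ) ≤ ((2 : ℝ) ^ n) ^ Q := by positivity
  have := mul_le_mul_of_nonneg_right hδ hpos
  linarith

/-- **Corollary 1.3 (second part).** For `n, k ∈ ℕ` and `η ∈ [0,1)`,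
`Q_r(J_{n,k,η}, 2η + ε, δ) ≤ (2^{k+5}/ε)·log((2/δ)·Σ_{r=0}^{k} C(n,r))`. -/
theorem stmt4 (n k : ℕ) (η : ℝ) (hη0 : 0 ≤ η) (hη1 : η < 1)
    (ε δ : ℝ) (hε0 : 0 < ε) (hε1 : ε < 1) (hδ0 : 0 < δ) (hδ1 : δ < 1) :
    ∃ (Q : ℕ) (H : (Fin Q → (Fin n → Bool) × ℝ) → ((Fin n → Bool) → ℝ)),
      RandLearns Q H (Jclass n k η) (2 * η + ε) δ ∧
      (Q : ℝ) ≤ 2 ^ (k + 5) / ε *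
        Real.log (2 / δ * ∑ r ∈ Finset.range (k + 1), (n.choose r : ℝ)) := by
  set M : ℝ := ∑ r ∈ Finset.range (k + 1), (n.choose r : ℝ) with hM
  have hM1 : 1 ≤ M := by
    have h : ((n.choose 0 : ℕ) : ℝ) ≤ M :=
      Finset.single_le_sum (f := fun r => (n.choose r : ℝ)) (fun _ _ => Nat.cast_nonneg _)
        (Finset.mem_range.mpr (Nat.succ_pos k))
    simpa using h
  have hpos : 0 < 2 / δ * M := by positivity
  set L := Real.log (2 / δ * M) with hL
  have hLhalf : 1 / 2 ≤ L := by
    have h2 : (2 : ℝ) ≤ 2 / δ * M := by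
      have : 2 ≤ 2 / δ := by
        rw [le_div_iff₀ hδ0]
        linarith
      nlinarith
    have := Real.log_le_log (by norm_num) h2
    linarith [Real.log_two_gt_d9]
  -- `b² = ε / (10 · 2^k)` is the accuracy for which the learner errs by at most `2η + ε`; the
  -- `20 · 2^k / ε · L` samples it takes leave room below `32 · 2^k / ε · L` for rounding up.
  set b := Real.sqrt (ε / (10 * 2 ^ k)) with hb
  have hb2 : b ^ 2 = ε / (10 * 2 ^ k) := Real.sq_sqrt (by positivity)
  set R := 20 * 2 ^ k / ε * L with hR
  have hK : (1 : ℝ) ≤ 2 ^ k := one_le_pow₀ (by norm_num)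
  have hKε : 1 ≤ 2 ^ k / ε := by
    rw [le_div_iff₀ hε0]
    linarith
  have hRpos : 0 < R := by positivity
  have hQ : 0 < ⌈R⌉₊ := Nat.ceil_pos.mpr hRpos
  refine ⟨⌈R⌉₊, learner n k ⌈R⌉₊, ?_, ?_⟩
  · rintro f ⟨hf, hj⟩
    have hδ' : 2 * M * Real.exp (-(⌈R⌉₊ * b ^ 2 / 2)) ≤ δ := by
      have h1 : L ≤ ⌈R⌉₊ * b ^ 2 / 2 := by
        have h2 : R * b ^ 2 / 2 = L := by
          rw [hb2, hR]
          field_simp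
          norm_num
        rw [← h2]
        gcongr
        exact Nat.le_ceil R
      have h3 : Real.exp (-(⌈R⌉₊ * b ^ 2 / 2)) ≤ (2 / δ * M)⁻¹ := by
        rw [← Real.exp_log hpos, ← Real.exp_neg]
        exact Real.exp_le_exp.mpr (neg_le_neg h1)
      calc 2 * M * Real.exp (-(⌈R⌉₊ * b ^ 2 / 2)) ≤ 2 * M * (2 / δ * M)⁻¹ := by gcongr
        _ = δ := by
          have : M ≠ 0 := by positivity
          field_simp
    refine (le_card_good hQ hf (Real.sqrt_nonneg _) hδ').trans ?_
    rw [Nat.card_eq_fintype_card, Fintype.card_subtype, Nat.cast_le]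
    refine Finset.card_le_card fun X hX => ?_
    rw [Finset.mem_filter] at hX ⊢
    refine ⟨Finset.mem_univ _, (dist2_learner_le hj _ hX.2).trans ?_⟩
    rw [hb2]
    apply le_of_eq
    field_simp
  · have h1 := (Nat.ceil_lt_add_one hRpos.le).le
    have h2 : 2 ^ (k + 5) / ε * L = 32 * (2 ^ k / ε * L) := by
      rw [pow_add]
      ring
    have h3 : R = 20 * (2 ^ k / ε * L) := by
      rw [hR]
      ring
    have h4 : 1 / 2 ≤ 2 ^ k / ε * L := by nlinarith
    rw [h2]
    linarith
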